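/- Let M be a model, w a world, Γ a finite set of formulas with M, w ⊨ Γ, and φ a formula with M, w ⊨ φ. Let σ be a model chain for (M, w, φ, ex(φ)) whose world-formula pairs are pairwise distinct. Then there exists a function chn' such that (M, w, chn') annotated-satisfies (Γ ∪ {φ}, ann⊥) and chn'(φ) = σ if φ ∈ Ev, where ann⊥ is the everywhere-undefined annotation. -/

import Mathlib

mutual
inductive Fml : Type where
  | var : ℕ → Fml
  | neg : Fml → Fml
  | and : Fml → Fml → Fml
  | or : Fml → Fml → Fml
  | dia : Prog → Fml → Fml
  | box : Prog → Fml → Fml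
  deriving DecidableEq
inductive Prog : Type where
  | atom : ℕ → Prog
  | conv : ℕ → Prog
  | seq : Prog → Prog → Prog
  | choice : Prog → Prog → Prog
  | star : Prog → Prog
  | test : Fml → Prog
  deriving DecidableEq
end

structure Model (W : Type) where
  R : ℕ → W → W → Prop
  V : ℕ → W → Prop

mutual
def Sat {W : Type} (M : Model W) : W → Fml → Prop
  | w, .var p => M.V p w
  | w, .neg φ => ¬ Sat M w φ
  | w, .and φ ψ => Sat M w φ ∧ Sat M w ψ
  | w, .or φ ψ => Sat M w φ ∨ Sat M w ψ
  | w, .dia γ φ => ∃ v, PRel M γ w v ∧ Sat M v φ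
  | w, .box γ φ => ∀ v, PRel M γ w v → Sat M v φ
def PRel {W : Type} (M : Model W) : Prog → W → W → Prop
  | .atom a, w, v => M.R a w v
  | .conv a, w, v => M.R a v w
  | .seq γ δ, w, v => ∃ u, PRel M γ w u ∧ PRel M δ u v
  | .choice γ δ, w, v => PRel M γ w v ∨ PRel M δ w v
  | .star γ, w, v => Relation.ReflTransGen (fun a b => PRel M γ a b) w v
  | .test φ, w, v => w = v ∧ Sat M w φ
end
mutual
def IsNNF : Fml → Prop
  | .var _ => True
  | .neg (.var _) => True
  | .neg _ => False
  | .and φ ψ => IsNNF φ ∧ IsNNF ψ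
  | .or φ ψ => IsNNF φ ∧ IsNNF ψ
  | .dia γ φ => IsNNFP γ ∧ IsNNF φ
  | .box γ φ => IsNNFP γ ∧ IsNNF φ
def IsNNFP : Prog → Prop
  | .atom _ => True
  | .conv _ => True
  | .seq γ δ => IsNNFP γ ∧ IsNNFP δ
  | .choice γ δ => IsNNFP γ ∧ IsNNFP δ
  | .star γ => IsNNFP γ
  | .test φ => IsNNF φ
end

mutual
/-- `nnf φ` is the negation normal form of `φ`. -/
def nnf : Fml → Fml
  | .var p => .var p
  | .neg φ => nnfNeg φ
  | .and φ ψ => .and (nnf φ) (nnf ψ)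
  | .or φ ψ => .or (nnf φ) (nnf ψ)
  | .dia γ φ => .dia γ (nnf φ)
  | .box γ φ => .box γ (nnf φ)
/-- `nnfNeg φ = nnf (¬ φ)`, written `∼φ`. -/
def nnfNeg : Fml → Fml
  | .var p => .neg (.var p)
  | .neg φ => nnf φ
  | .and φ ψ => .or (nnfNeg φ) (nnfNeg ψ)
  | .or φ ψ => .and (nnfNeg φ) (nnfNeg ψ)
  | .dia γ φ => .box γ (nnfNeg φ)
  | .box γ φ => .dia γ (nnfNeg φ)
end

/-- Literal programs: atomic programs or converses of atomic programs. -/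
inductive Lit : Type where
  | atom : ℕ → Lit
  | conv : ℕ → Lit
  deriving DecidableEq

def Lit.toProg : Lit → Prog
  | .atom a => .atom a
  | .conv a => .conv a

/-- The converse `l⁻` of a literal program. -/
def Lit.inv : Lit → Lit
  | .atom a => .conv a
  | .conv a => .atom a

/-- The reduction relation `⤳` on ⟨·⟩-formulae. -/
inductive Red : Fml → Fml → Prop where
  | seq (γ δ χ) : Red (.dia (.seq γ δ) χ) (.dia γ (.dia δ χ))
  | choiceL (γ δ χ) : Red (.dia (.choice γ δ) χ) (.dia γ χ)
  | choiceR (γ δ χ) : Red (.dia (.choice γ δ) χ) (.dia δ χ)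
  | star1 (γ χ) : Red (.dia (.star γ) χ) χ
  | star2 (γ χ) : Red (.dia (.star γ) χ) (.dia γ (.dia (.star γ) χ))
  | test (ϕ χ) : Red (.dia (.test ϕ) χ) χ

/-- `InPre ψ φ` means `φ ∈ pre(ψ)`, i.e. `φ = ⟨γ₁⟩…⟨γ_k⟩ψ`. -/
inductive InPre (ψ : Fml) : Fml → Prop where
  | base : InPre ψ ψ
  | step (γ φ) : InPre ψ φ → InPre ψ (.dia γ φ)

/-- `φ` is an eventuality: `φ = ⟨γ₁⟩…⟨γ_k⟩⟨γ*⟩ψ`. -/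
def IsEv (φ : Fml) : Prop := ∃ γ ψ, InPre (.dia (.star γ) ψ) φ

mutual
/-- Size of formulas. -/
def fsize : Fml → ℕ
  | .var _ => 1
  | .neg (.var _) => 1
  | .neg φ => 1 + fsize φ
  | .and φ ψ => 1 + fsize φ + fsize ψ
  | .or φ ψ => 1 + fsize φ + fsize ψ
  | .dia γ φ => psize γ + fsize φ
  | .box γ φ => psize γ + fsize φ
/-- Size of programs. -/
def psize : Prog → ℕ
  | .atom _ => 1
  | .conv _ => 1
  | .seq γ δ => 1 + psize γ + psize δ
  | .choice γ δ => 1 + psize γ + psize δ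
  | .star γ => 1 + psize γ
  | .test φ => 1 + fsize φ
end
/-- One decomposition step generating the closure `cl(φ)`. -/
inductive ClStep : Fml → Fml → Prop where
  | diaLit (l : Lit) (ψ) : ClStep (.dia l.toProg ψ) ψ
  | boxLit (l : Lit) (ψ) : ClStep (.box l.toProg ψ) ψ
  | andL (φ ψ) : ClStep (.and φ ψ) φ
  | andR (φ ψ) : ClStep (.and φ ψ) ψ
  | orL (φ ψ) : ClStep (.or φ ψ) φ
  | orR (φ ψ) : ClStep (.or φ ψ) ψ
  | boxChoiceL (γ δ φ) : ClStep (.box (.choice γ δ) φ) (.box γ φ)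
  | boxChoiceR (γ δ φ) : ClStep (.box (.choice γ δ) φ) (.box δ φ)
  | boxStar1 (γ φ) : ClStep (.box (.star γ) φ) φ
  | boxStar2 (γ φ) : ClStep (.box (.star γ) φ) (.box γ (.box (.star γ) φ))
  | diaTest1 (ψ φ) : ClStep (.dia (.test ψ) φ) φ
  | diaTest2 (ψ φ) : ClStep (.dia (.test ψ) φ) ψ
  | diaSeq (γ δ φ) : ClStep (.dia (.seq γ δ) φ) (.dia γ (.dia δ φ))
  | boxSeq (γ δ φ) : ClStep (.box (.seq γ δ) φ) (.box γ (.box δ φ))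
  | diaChoiceL (γ δ φ) : ClStep (.dia (.choice γ δ) φ) (.dia γ φ)
  | diaChoiceR (γ δ φ) : ClStep (.dia (.choice γ δ) φ) (.dia δ φ)
  | diaStar1 (γ φ) : ClStep (.dia (.star γ) φ) φ
  | diaStar2 (γ φ) : ClStep (.dia (.star γ) φ) (.dia γ (.dia (.star γ) φ))
  | boxTest1 (ψ φ) : ClStep (.box (.test ψ) φ) φ
  | boxTest2 (ψ φ) : ClStep (.box (.test ψ) φ) (nnfNeg ψ)

/-- The closure `cl(φ)`: the least set containing `φ` and closed under `ClStep`. -/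
def Cl (φ : Fml) : Set Fml := {ψ | Relation.ReflTransGen ClStep φ ψ}

/-- A single step of a (model) chain: a literal-program diamond is instantiated,
otherwise a `⤳`-reduction happens at the same world. -/
def ChainStep {W : Type} (M : Model W) : (W × Fml) → (W × Fml) → Prop
  | (w, .dia (.atom a) χ), (w', χ') => χ' = χ ∧ M.R a w w'
  | (w, .dia (.conv a) χ), (w', χ') => χ' = χ ∧ M.R a w' w
  | (w, χ), (w', χ') => Red χ χ' ∧ w' = w

/-- `σ` is a model chain for `(M, w, φ, ψ)`. -/
def ModelChain {W : Type} (M : Model W) (w : W) (φ ψ : Fml) (σ : List (W × Fml)) : Prop :=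
  ∃ h : σ ≠ [], σ.head h = (w, φ) ∧ (σ.getLast h).2 = ψ ∧
    (∀ p ∈ σ, Sat M p.1 p.2) ∧
    ∀ i, (h1 : i + 1 < σ.length) →
      ChainStep M (σ.get ⟨i, by omega⟩) (σ.get ⟨i + 1, h1⟩)

open Classical in
/-- `ex φ`: the largest non-eventuality `ψ` with `φ ∈ pre(ψ)`. -/
noncomputable def ex : Fml → Fml
  | .dia γ ψ => if IsEv (.dia γ ψ) then ex ψ else .dia γ ψ
  | φ => φ

mutual
/-- `SubF χ φ`: `χ` is a subformula of the formula `φ`. -/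
inductive SubF : Fml → Fml → Prop where
  | refl (φ) : SubF φ φ
  | neg {χ φ} : SubF χ φ → SubF χ (.neg φ)
  | andL {χ φ ψ} : SubF χ φ → SubF χ (.and φ ψ)
  | andR {χ φ ψ} : SubF χ ψ → SubF χ (.and φ ψ)
  | orL {χ φ ψ} : SubF χ φ → SubF χ (.or φ ψ)
  | orR {χ φ ψ} : SubF χ ψ → SubF χ (.or φ ψ)
  | diaF {χ γ φ} : SubF χ φ → SubF χ (.dia γ φ)
  | diaP {χ γ φ} : SubP χ γ → SubF χ (.dia γ φ)
  | boxF {χ γ φ} : SubF χ φ → SubF χ (.box γ φ)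
  | boxP {χ γ φ} : SubP χ γ → SubF χ (.box γ φ)
/-- `SubP χ γ`: `χ` is a subformula of the program `γ`. -/
inductive SubP : Fml → Prog → Prop where
  | seqL {χ γ δ} : SubP χ γ → SubP χ (.seq γ δ)
  | seqR {χ γ δ} : SubP χ δ → SubP χ (.seq γ δ)
  | choiceL {χ γ δ} : SubP χ γ → SubP χ (.choice γ δ)
  | choiceR {χ γ δ} : SubP χ δ → SubP χ (.choice γ δ)
  | star {χ γ} : SubP χ γ → SubP χ (.star γ)
  | test {χ φ} : SubF χ φ → SubP χ (.test φ)
end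
/-- `ann` is an annotation for `Γ`: it maps some eventualities `φ ∈ Γ`
to a formula `ann φ ∈ Γ` with `φ ⤳ ann φ`. -/
def IsAnnotation (Γ : Set Fml) (ann : Fml → Option Fml) : Prop :=
  ∀ φ φ', ann φ = some φ' → φ ∈ Γ ∧ IsEv φ ∧ φ' ∈ Γ ∧ Red φ φ'

/-- `ann` is full on `Γ`: it is defined on all eventualities of `Γ`. -/
def FullAnn (Γ : Set Fml) (ann : Fml → Option Fml) : Prop :=
  ∀ φ ∈ Γ, IsEv φ → (ann φ).isSome

/-- `ann` is non-cyclic: there is no cycle `φ₀, …, φ_n` with `ann φ_i = φ_{i+1 mod n+1}`. -/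
def NonCyclic (ann : Fml → Option Fml) : Prop :=
  ¬ ∃ (n : ℕ) (f : ℕ → Fml), (∀ i < n, ann (f i) = some (f (i + 1))) ∧ ann (f n) = some (f 0)

/-- One step of iterating an annotation (identity where undefined). -/
def annStep (ann : Fml → Option Fml) (φ : Fml) : Fml := (ann φ).getD φ

/-- The pure-formula version of a chain step:
if `χ = ⟨l⟩χ₀` for a literal program `l` then `χ' = χ₀`, else `χ ⤳ χ'`. -/
def FStep : Fml → Fml → Prop
  | .dia (.atom _) χ, χ' => χ' = χ
  | .dia (.conv _) χ, χ' => χ' = χ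
  | χ, χ' => Red χ χ'

mutual
/-- The atomic program `d` occurs in a formula. -/
def OccursF (d : ℕ) : Fml → Prop
  | .var _ => False
  | .neg φ => OccursF d φ
  | .and φ ψ => OccursF d φ ∨ OccursF d ψ
  | .or φ ψ => OccursF d φ ∨ OccursF d ψ
  | .dia γ φ => OccursP d γ ∨ OccursF d φ
  | .box γ φ => OccursP d γ ∨ OccursF d φ
/-- The atomic program `d` occurs in a program (as `d` or `d⁻`). -/
def OccursP (d : ℕ) : Prog → Prop
  | .atom a => a = d
  | .conv a => a = d
  | .seq γ δ => OccursP d γ ∨ OccursP d δ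
  | .choice γ δ => OccursP d γ ∨ OccursP d δ
  | .star γ => OccursP d γ
  | .test φ => OccursF d φ
end

/-- `(M, w, chn)` annotated-satisfies `(Γ, ann)`. -/
def AnnSat {W : Type} (M : Model W) (w : W)
    (chn : Fml → Option (List (W × Fml))) (Γ : Set Fml) (ann : Fml → Option Fml) : Prop :=
  (∀ ψ ∈ Γ, Sat M w ψ) ∧
  (∀ ψ ∈ Γ, IsEv ψ → (chn ψ).isSome) ∧
  (∀ ψ σ, IsEv ψ → chn ψ = some σ →
    ModelChain M w ψ (ex ψ) σ ∧
    (∀ i, (h : i < σ.length) → ∀ χ, σ.get ⟨i, h⟩ = (w, χ) → IsEv χ → chn χ = some (σ.drop i)) ∧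
    (∀ ψ', ann ψ = some ψ' → ∃ h : 1 < σ.length, σ.get ⟨1, h⟩ = (w, ψ')))

theorem not_isEv_of_ne_dia {φ : Fml} (h : ∀ γ χ, φ ≠ .dia γ χ) : ¬ IsEv φ := by
  rintro ⟨γ, ψ, hp⟩
  cases hp with
  | base => exact h _ _ rfl
  | step δ χ _ => exact h _ _ rfl

theorem isEv_dia_iff {γ : Prog} {χ : Fml} :
    IsEv (.dia γ χ) ↔ (∃ δ, γ = .star δ) ∨ IsEv χ := by
  constructor
  · rintro ⟨δ, ψ, h⟩
    cases h with
    | base => exact Or.inl ⟨_, rfl⟩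
    | step _ _ h => exact Or.inr ⟨_, _, h⟩
  · rintro (⟨δ, rfl⟩ | ⟨δ, ψ, h⟩)
    · exact ⟨_, _, .base⟩
    · exact ⟨_, _, .step _ _ h⟩

theorem ex_dia_of_isEv {γ : Prog} {χ : Fml} (h : IsEv (.dia γ χ)) : ex (.dia γ χ) = ex χ := by
  rw [ex, if_pos h]

theorem ex_eq_self {φ : Fml} (h : ¬ IsEv φ) : ex φ = φ := by
  cases φ with
  | dia γ χ => rw [ex, if_neg h]
  | _ => simp [ex]

theorem not_isEv_ex : (φ : Fml) → ¬ IsEv (ex φ)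
  | .dia γ χ => by
    by_cases h : IsEv (.dia γ χ)
    · rw [ex_dia_of_isEv h]
      exact not_isEv_ex χ
    · rwa [ex_eq_self h]
  | .var _ | .neg _ | .and _ _ | .or _ _ | .box _ _ => by
    rw [ex_eq_self] <;> exact not_isEv_of_ne_dia (by simp)

theorem psize_pos (γ : Prog) : 0 < psize γ := by
  cases γ <;> simp [psize]

theorem fsize_ex_le : (φ : Fml) → fsize (ex φ) ≤ fsize φ
  | .dia γ χ => by
    by_cases h : IsEv (.dia γ χ)
    · rw [ex_dia_of_isEv h]
      have := fsize_ex_le χ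
      simp only [fsize]
      omega
    · rw [ex_eq_self h]
  | .var _ | .neg _ | .and _ _ | .or _ _ | .box _ _ => by
    rw [ex_eq_self]
    exact not_isEv_of_ne_dia (by simp)

theorem Red.chainStep {W : Type} (M : Model W) (v : W) {χ χ' : Fml} (h : Red χ χ') :
    ChainStep M (v, χ) (v, χ') := by
  cases h <;> simp only [ChainStep, and_true] <;> constructor

theorem ChainStep.lit_or_red {W : Type} {M : Model W} {p q : W × Fml} (h : ChainStep M p q) :
    (∃ l : Lit, p.2 = .dia l.toProg q.2) ∨ Red p.2 q.2 := by
  obtain ⟨v, χ⟩ := p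
  obtain ⟨v', χ'⟩ := q
  unfold ChainStep at h
  split at h
  next a _ _ _ heq heq' =>
    cases heq
    cases heq'
    exact Or.inl ⟨.atom a, by simp [h.1, Lit.toProg]⟩
  next a _ _ _ heq heq' =>
    cases heq
    cases heq'
    exact Or.inl ⟨.conv a, by simp [h.1, Lit.toProg]⟩
  next heq heq' =>
    cases heq
    cases heq'
    exact Or.inr h.1

theorem ChainStep.ex_eq {W : Type} {M : Model W} {p q : W × Fml} (h : ChainStep M p q)
    (hp : IsEv p.2) : ex q.2 = ex p.2 := by
  rcases h.lit_or_red with ⟨l, hl⟩ | hr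
  · rw [hl] at hp ⊢
    exact (ex_dia_of_isEv hp).symm
  · generalize p.2 = χ at *
    generalize q.2 = χ' at *
    cases hr with
    | seq γ δ χ =>
      have hχ : IsEv χ := by simpa [isEv_dia_iff] using hp
      have hδ : IsEv (.dia δ χ) := isEv_dia_iff.2 (.inr hχ)
      rw [ex_dia_of_isEv hp, ex_dia_of_isEv (isEv_dia_iff.2 (.inr hδ)), ex_dia_of_isEv hδ]
    | choiceL γ δ χ =>
      have hχ : IsEv χ := by simpa [isEv_dia_iff] using hp
      rw [ex_dia_of_isEv hp, ex_dia_of_isEv (isEv_dia_iff.2 (.inr hχ))]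
    | choiceR γ δ χ =>
      have hχ : IsEv χ := by simpa [isEv_dia_iff] using hp
      rw [ex_dia_of_isEv hp, ex_dia_of_isEv (isEv_dia_iff.2 (.inr hχ))]
    | star1 γ χ => rw [ex_dia_of_isEv hp]
    | star2 γ χ => rw [ex_dia_of_isEv (isEv_dia_iff.2 (.inr hp))]
    | test ϕ χ => rw [ex_dia_of_isEv hp]

theorem ChainStep.fsize_ex_lt {W : Type} {M : Model W} {p q : W × Fml} (h : ChainStep M p q)
    (hp : ¬ IsEv p.2) : fsize (ex q.2) < fsize (ex p.2) := by
  rw [ex_eq_self hp]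
  refine (fsize_ex_le q.2).trans_lt ?_
  rcases h.lit_or_red with ⟨l, hl⟩ | hr
  · have := psize_pos l.toProg
    rw [hl, fsize]
    omega
  · generalize p.2 = χ at *
    generalize q.2 = χ' at *
    cases hr with
    | seq γ δ χ => simp only [fsize, psize]; omega
    | choiceL γ δ χ => simp only [fsize, psize]; omega
    | choiceR γ δ χ => simp only [fsize, psize]; omega
    | star1 γ χ => exact absurd (isEv_dia_iff.2 (.inl ⟨_, rfl⟩)) hp
    | star2 γ χ => exact absurd (isEv_dia_iff.2 (.inl ⟨_, rfl⟩)) hp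
    | test ϕ χ => simp only [fsize, psize]; omega

/-- `EvRun M e p τ`: `τ` is a model chain starting at `p`, ending in the non-eventuality `e`,
all of whose other formulas are eventualities with exit `e`. -/
inductive EvRun {W : Type} (M : Model W) (e : Fml) : W × Fml → List (W × Fml) → Prop where
  | last (v : W) (he : ¬ IsEv e) (hs : Sat M v e) : EvRun M e (v, e) [(v, e)]
  | cons {p q : W × Fml} {τ : List (W × Fml)} (hp : IsEv p.2) (hx : ex p.2 = e)
      (hs : Sat M p.1 p.2) (hstep : ChainStep M p q) (hq : EvRun M e q τ) :
      EvRun M e p (p :: τ)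

namespace EvRun

variable {W : Type} {M : Model W} {e : Fml}

theorem eq_cons {p : W × Fml} {τ : List (W × Fml)} (h : EvRun M e p τ) : ∃ ρ, τ = p :: ρ := by
  cases h <;> exact ⟨_, rfl⟩

theorem sat {p : W × Fml} {τ : List (W × Fml)} (h : EvRun M e p τ) : Sat M p.1 p.2 := by
  cases h <;> assumption

theorem modelChain {p : W × Fml} {τ : List (W × Fml)} (h : EvRun M e p τ) :
    ModelChain M p.1 p.2 e τ := by
  induction h with
  | last v he hs => exact ⟨by simp, by simp, by simp, by simpa using hs, by simp⟩
  | @cons p q τ hp hx hs hstep hq ih =>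
    obtain ⟨hne, hhead, hlast, hsat, hsteps⟩ := ih
    refine ⟨by simp, by simp, by rwa [List.getLast_cons hne], ?_, ?_⟩
    · simpa using ⟨hs, by simpa using hsat⟩
    · obtain ⟨ρ, rfl⟩ := hq.eq_cons
      rintro (_ | i) hi
      · exact hstep
      · exact hsteps i (by simpa using hi)

theorem fsize_le_of_isChain {p : W × Fml} {τ : List (W × Fml)}
    (hc : (p :: τ).IsChain (ChainStep M)) :
    fsize (ex ((p :: τ).getLast (by simp)).2) ≤ fsize (ex p.2) := by
  induction τ generalizing p with
  | nil => simp
  | cons q τ ih =>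
    rw [List.isChain_cons_cons] at hc
    rw [List.getLast_cons (by simp)]
    refine (ih hc.2).trans ?_
    by_cases hp : IsEv p.2
    · rw [hc.1.ex_eq hp]
    · exact (hc.1.fsize_ex_lt hp).le

theorem of_isChain (he : ¬ IsEv e) {p : W × Fml} {τ : List (W × Fml)}
    (hc : (p :: τ).IsChain (ChainStep M)) (hlast : ((p :: τ).getLast (by simp)).2 = e)
    (hsat : ∀ q ∈ p :: τ, Sat M q.1 q.2) (hx : ex p.2 = e) : EvRun M e p (p :: τ) := by
  induction τ generalizing p with
  | nil =>
    obtain ⟨v, χ⟩ := p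
    obtain rfl : χ = e := by simpa using hlast
    exact .last v he (hsat (v, χ) (by simp))
  | cons q τ ih =>
    rw [List.isChain_cons_cons] at hc
    rw [List.getLast_cons (by simp)] at hlast
    have hle := fsize_le_of_isChain hc.2
    rw [hlast, ex_eq_self he] at hle
    have hp : IsEv p.2 := by
      by_contra hp
      have := hc.1.fsize_ex_lt hp
      rw [hx] at this
      omega
    exact .cons hp hx (hsat _ (by simp)) hc.1
      (ih hc.2 hlast (fun r hr => hsat r (List.mem_cons_of_mem _ hr)) ((hc.1.ex_eq hp).trans hx))

theorem of_modelChain {w : W} {φ : Fml} {σ : List (W × Fml)} (h : ModelChain M w φ (ex φ) σ) :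
    EvRun M (ex φ) (w, φ) σ := by
  obtain ⟨hne, hhead, hlast, hsat, hsteps⟩ := h
  obtain ⟨p, τ, rfl⟩ := List.exists_cons_of_ne_nil hne
  obtain rfl : p = (w, φ) := by simpa using hhead
  exact of_isChain (not_isEv_ex φ)
    (List.isChain_iff_getElem.2 fun i hi => hsteps i hi) hlast hsat rfl

theorem exists_dia : (γ : Prog) → {v u : W} → {χ : Fml} → {τ : List (W × Fml)} →
    PRel M γ v u → IsEv (.dia γ χ) → ex χ = e → EvRun M e (u, χ) τ →
    ∃ τ', EvRun M e (v, .dia γ χ) τ'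
  | .atom a, v, u, χ, τ, hR, hEv, hx, hτ =>
    ⟨_, .cons hEv ((ex_dia_of_isEv hEv).trans hx) (by rw [Sat]; exact ⟨u, hR, hτ.sat⟩)
      (by rw [PRel] at hR; simpa [ChainStep] using hR) hτ⟩
  | .conv a, v, u, χ, τ, hR, hEv, hx, hτ =>
    ⟨_, .cons hEv ((ex_dia_of_isEv hEv).trans hx) (by rw [Sat]; exact ⟨u, hR, hτ.sat⟩)
      (by rw [PRel] at hR; simpa [ChainStep] using hR) hτ⟩
  | .test ϕ, v, u, χ, τ, hR, hEv, hx, hτ => by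
    have hs : Sat M v (.dia (.test ϕ) χ) := by rw [Sat]; exact ⟨u, hR, hτ.sat⟩
    rw [PRel] at hR
    obtain ⟨rfl, -⟩ := hR
    exact ⟨_, .cons hEv ((ex_dia_of_isEv hEv).trans hx) hs ((Red.test ϕ χ).chainStep M v) hτ⟩
  | .choice γ δ, v, u, χ, τ, hR, hEv, hx, hτ => by
    have hs : Sat M v (.dia (.choice γ δ) χ) := by rw [Sat]; exact ⟨u, hR, hτ.sat⟩
    have hχ : IsEv χ := by simpa [isEv_dia_iff] using hEv
    rw [PRel] at hR
    rcases hR with hR | hR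
    · obtain ⟨ρ, hρ⟩ := exists_dia γ hR (isEv_dia_iff.2 (.inr hχ)) hx hτ
      exact ⟨_, .cons hEv ((ex_dia_of_isEv hEv).trans hx) hs
        ((Red.choiceL γ δ χ).chainStep M v) hρ⟩
    · obtain ⟨ρ, hρ⟩ := exists_dia δ hR (isEv_dia_iff.2 (.inr hχ)) hx hτ
      exact ⟨_, .cons hEv ((ex_dia_of_isEv hEv).trans hx) hs
        ((Red.choiceR γ δ χ).chainStep M v) hρ⟩
  | .seq γ δ, v, u, χ, τ, hR, hEv, hx, hτ => by
    have hs : Sat M v (.dia (.seq γ δ) χ) := by rw [Sat]; exact ⟨u, hR, hτ.sat⟩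
    have hχ : IsEv χ := by simpa [isEv_dia_iff] using hEv
    have hδ : IsEv (.dia δ χ) := isEv_dia_iff.2 (.inr hχ)
    rw [PRel] at hR
    obtain ⟨t, hvt, htu⟩ := hR
    obtain ⟨ρ, hρ⟩ := exists_dia δ htu hδ hx hτ
    obtain ⟨π, hπ⟩ := exists_dia γ hvt (isEv_dia_iff.2 (.inr hδ))
      ((ex_dia_of_isEv hδ).trans hx) hρ
    exact ⟨_, .cons hEv ((ex_dia_of_isEv hEv).trans hx) hs ((Red.seq γ δ χ).chainStep M v) hπ⟩
  | .star γ, v, u, χ, τ, hR, hEv, hx, hτ => by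
    rw [PRel] at hR
    induction hR using Relation.ReflTransGen.head_induction_on with
    | refl =>
      refine ⟨_, .cons hEv ((ex_dia_of_isEv hEv).trans hx) ?_ ((Red.star1 γ χ).chainStep M u) hτ⟩
      rw [Sat]
      exact ⟨u, by rw [PRel], hτ.sat⟩
    | @head a b hab hbu ih =>
      obtain ⟨ρ, hρ⟩ := ih
      obtain ⟨π, hπ⟩ := exists_dia γ hab (isEv_dia_iff.2 (.inr hEv))
        ((ex_dia_of_isEv hEv).trans hx) hρ
      refine ⟨_, .cons hEv ((ex_dia_of_isEv hEv).trans hx) ?_ ((Red.star2 γ χ).chainStep M a) hπ⟩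
      rw [Sat]
      exact ⟨u, by rw [PRel]; exact .head hab hbu, hτ.sat⟩

theorem exists_of_not_isEv {ψ : Fml} {v : W} (h : ¬ IsEv ψ) (hs : Sat M v ψ) :
    ∃ τ, EvRun M (ex ψ) (v, ψ) τ := by
  rw [ex_eq_self h]
  exact ⟨_, .last v h hs⟩

theorem exists_of_sat : (ψ : Fml) → {v : W} → Sat M v ψ → ∃ τ, EvRun M (ex ψ) (v, ψ) τ
  | .dia γ χ, v, hs => by
    by_cases h : IsEv (.dia γ χ)
    · rw [Sat] at hs
      obtain ⟨u, hR, hu⟩ := hs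
      obtain ⟨τ, hτ⟩ := exists_of_sat χ hu
      rw [ex_dia_of_isEv h]
      exact exists_dia γ hR h rfl hτ
    · exact exists_of_not_isEv h hs
  | .var _, v, hs | .neg _, v, hs | .and _ _, v, hs | .or _ _, v, hs | .box _ _, v, hs => by
    exact exists_of_not_isEv (not_isEv_of_ne_dia (by simp)) hs

end EvRun

/-- Along `τ`, every eventuality at `w` is assigned the corresponding suffix of `τ`. -/
def SuffixCoherent {W : Type} (w : W) (chn : Fml → Option (List (W × Fml)))
    (τ : List (W × Fml)) : Prop :=
  ∀ (i : ℕ) (χ : Fml), τ[i]? = some (w, χ) → IsEv χ → chn χ = some (τ.drop i)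

/-- `chn` assigns to eventualities suffix-coherent model chains from `w` to their exits. -/
def CoherentChains {W : Type} (M : Model W) (w : W)
    (chn : Fml → Option (List (W × Fml))) : Prop :=
  ∀ ψ τ, IsEv ψ → chn ψ = some τ → EvRun M (ex ψ) (w, ψ) τ ∧ SuffixCoherent w chn τ

theorem SuffixCoherent.mono {W : Type} {w : W} {chn chn' : Fml → Option (List (W × Fml))}
    {τ : List (W × Fml)} (h : SuffixCoherent w chn τ)
    (hle : ∀ χ ρ, chn χ = some ρ → chn' χ = some ρ) : SuffixCoherent w chn' τ :=
  fun i χ hi hχ => hle _ _ (h i χ hi hχ)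

/-- A run can be rerouted, and the assignment extended, so that the two are coherent; a
repetition-free run avoiding the domain of the assignment at `w` need not be changed. -/
theorem EvRun.exists_coherent_extension {W : Type} {M : Model W} {w : W} {e : Fml}
    {p : W × Fml} {τ : List (W × Fml)} (hτ : EvRun M e p τ)
    {chn : Fml → Option (List (W × Fml))} (hchn : CoherentChains M w chn) :
    ∃ chn' τ', CoherentChains M w chn' ∧ (∀ χ ρ, chn χ = some ρ → chn' χ = some ρ) ∧
      EvRun M e p τ' ∧ SuffixCoherent w chn' τ' ∧
      (τ.Nodup → (∀ χ, (w, χ) ∈ τ → chn χ = none) →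
        τ' = τ ∧ ∀ χ, (w, χ) ∉ τ → chn' χ = chn χ) := by
  induction hτ with
  | last v he hs =>
    refine ⟨chn, _, hchn, fun _ _ h => h, .last v he hs, ?_, fun _ _ => ⟨rfl, fun _ _ => rfl⟩⟩
    rintro (_ | i) χ hi hχ
    · simp only [List.getElem?_cons_zero, Option.some.injEq, Prod.mk.injEq] at hi
      exact absurd (hi.2 ▸ hχ) he
    · simp at hi
  | @cons p q τ hp hx hs hstep hq ih =>
    obtain ⟨chn₁, τ₁, hcoh, hle, hrun, hsuf, hnd⟩ := ih
    have hrun' : EvRun M e p (p :: τ₁) := .cons hp hx hs hstep hrun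
    obtain ⟨v, ψ⟩ := p
    by_cases hv : v = w
    · subst hv
      cases hψ : chn₁ ψ with
      | some ρ =>
        obtain ⟨hρ, hρs⟩ := hcoh ψ ρ hp hψ
        refine ⟨chn₁, ρ, hcoh, hle, by rwa [← hx], hρs, fun hn hdom => ?_⟩
        rw [List.nodup_cons] at hn
        have h := (hnd hn.2 fun χ h => hdom χ (List.mem_cons_of_mem _ h)).2 ψ hn.1
        simp [hψ, hdom ψ (by simp)] at h
      | none =>
        have hle' : ∀ χ ρ, chn₁ χ = some ρ →
            Function.update chn₁ ψ (some ((v, ψ) :: τ₁)) χ = some ρ := by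
          intro χ ρ h
          rw [Function.update_of_ne _, h]
          rintro rfl
          simp [hψ] at h
        have hsuf' : SuffixCoherent v (Function.update chn₁ ψ (some ((v, ψ) :: τ₁)))
            ((v, ψ) :: τ₁) := by
          rintro (_ | i) χ hi hχ
          · obtain rfl : ψ = χ := by simpa using hi
            simp
          · exact hle' _ _ (hsuf i χ (by simpa using hi) hχ)
        refine ⟨Function.update chn₁ ψ (some ((v, ψ) :: τ₁)), _, ?_,
          fun χ ρ h => hle' _ _ (hle _ _ h), hrun', hsuf', fun hn hdom => ?_⟩
        · intro χ ρ hχ h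
          by_cases hne : χ = ψ
          · subst hne
            obtain rfl : (v, χ) :: τ₁ = ρ := by simpa using h
            exact ⟨by rw [hx]; exact hrun', hsuf'⟩
          · rw [Function.update_of_ne hne] at h
            obtain ⟨h₁, h₂⟩ := hcoh χ ρ hχ h
            exact ⟨h₁, h₂.mono hle'⟩
        · rw [List.nodup_cons] at hn
          obtain ⟨rfl, hout⟩ := hnd hn.2 fun χ h => hdom χ (List.mem_cons_of_mem _ h)
          refine ⟨rfl, fun χ hχ => ?_⟩
          simp only [List.mem_cons, Prod.mk.injEq, true_and, not_or] at hχ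
          rw [Function.update_of_ne hχ.1, hout χ hχ.2]
    · refine ⟨chn₁, _, hcoh, hle, hrun', ?_, fun hn hdom => ?_⟩
      · rintro (_ | i) χ hi hχ
        · simp [hv] at hi
        · exact hsuf i χ (by simpa using hi) hχ
      · rw [List.nodup_cons] at hn
        obtain ⟨rfl, hout⟩ := hnd hn.2 fun χ h => hdom χ (List.mem_cons_of_mem _ h)
        exact ⟨rfl, fun χ hχ => hout χ fun h => hχ (List.mem_cons_of_mem _ h)⟩

theorem EvRun.apply_eq_of_suffixCoherent {W : Type} {M : Model W} {w : W} {e ψ : Fml}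
    {τ : List (W × Fml)} {chn : Fml → Option (List (W × Fml))} (hτ : EvRun M e (w, ψ) τ)
    (h : SuffixCoherent w chn τ) (hψ : IsEv ψ) : chn ψ = some τ := by
  obtain ⟨ρ, rfl⟩ := hτ.eq_cons
  simpa using h 0 ψ (by simp) hψ

theorem CoherentChains.exists_extension_of_finite {W : Type} {M : Model W} {w : W} {Γ : Set Fml}
    (hfin : Γ.Finite) (hΓ : ∀ ψ ∈ Γ, Sat M w ψ) {chn : Fml → Option (List (W × Fml))}
    (hchn : CoherentChains M w chn) :
    ∃ chn', CoherentChains M w chn' ∧ (∀ χ ρ, chn χ = some ρ → chn' χ = some ρ) ∧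
      ∀ ψ ∈ Γ, IsEv ψ → (chn' ψ).isSome := by
  induction Γ, hfin using Set.Finite.induction_on with
  | empty => exact ⟨chn, hchn, fun _ _ h => h, by simp⟩
  | @insert ψ Γ _ _ ih =>
    obtain ⟨chn₁, hcoh, hle, hdom⟩ := ih fun χ hχ => hΓ χ (Set.mem_insert_of_mem _ hχ)
    obtain ⟨τ, hτ⟩ := EvRun.exists_of_sat ψ (hΓ ψ (Set.mem_insert _ _))
    obtain ⟨chn₂, τ', hcoh₂, hle₂, hτ', hsuf, -⟩ := hτ.exists_coherent_extension hcoh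
    refine ⟨chn₂, hcoh₂, fun χ ρ h => hle₂ _ _ (hle _ _ h), ?_⟩
    rintro χ (rfl | hχ) hEv
    · simp [hτ'.apply_eq_of_suffixCoherent hsuf hEv]
    · obtain ⟨ρ, hρ⟩ := Option.isSome_iff_exists.1 (hdom χ hχ hEv)
      simp [hle₂ _ _ hρ]

/-- Prop. annsat (2): from a repetition-free model chain for
`(M, w, φ, ex(φ))` one obtains annotated satisfaction of `Γ ∪ {φ}` with the
everywhere-undefined annotation, with `chn' φ = σ` if `φ` is an eventuality. -/
theorem annsat_from_chain {W : Type} (M : Model W) (w : W) (Γ : Set Fml)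
    (hfin : Γ.Finite) (hΓ : ∀ ψ ∈ Γ, Sat M w ψ) (φ : Fml) (hφ : Sat M w φ)
    (σ : List (W × Fml)) (hσ : ModelChain M w φ (ex φ) σ) (hnd : σ.Nodup) :
    ∃ chn', AnnSat M w chn' (Γ ∪ {φ}) (fun _ => none) ∧
      (IsEv φ → chn' φ = some σ) := by
  have hrun := EvRun.of_modelChain hσ
  obtain ⟨chn₀, σ', hcoh₀, -, hrun', hsuf, hnodup⟩ :=
    hrun.exists_coherent_extension (w := w) (chn := fun _ => none) (fun _ _ _ h => by simp at h)
  obtain rfl : σ' = σ := (hnodup hnd fun _ _ => rfl).1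
  obtain ⟨chn, hcoh, hle, hdom⟩ := hcoh₀.exists_extension_of_finite hfin hΓ
  have hval : IsEv φ → chn φ = some σ' := fun h =>
    hle _ _ (hrun'.apply_eq_of_suffixCoherent hsuf h)
  refine ⟨chn, ⟨?_, ?_, fun ψ τ hψ hτ => ?_⟩, hval⟩
  · rintro ψ (hψ | rfl)
    exacts [hΓ ψ hψ, hφ]
  · rintro ψ (hψ | rfl) hEv
    · exact hdom ψ hψ hEv
    · simp [hval hEv]
  · obtain ⟨h₁, h₂⟩ := hcoh ψ τ hψ hτ
    refine ⟨h₁.modelChain, fun i h χ hi hχ => h₂ i χ ?_ hχ, by simp⟩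
    rw [List.getElem?_eq_getElem h]
    exact congrArg some hi
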